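/- Let n ≥ 2, let q : ℝ^n_+ → ℝ satisfy the cost-function conditions, and let c ∈ ℝ^n_+. Then the profit operator Π_q is injective on L^1_{I−c}(ℝ^n_+) (i.e., if f ∈ L^1_{I−c}(ℝ^n_+) and (Π_q f)(p_0,p) = 0 for all p_0 > 0 and all p ∈ ℝ^n_+, then f = 0 a.e.) if and only if the set { ξ ∈ ℝ^n : (M e^{−q})(c + iξ) = 0 } is nowhere dense in ℝ^n. -/

import Mathlib

open MeasureTheory Complex Set

noncomputable section

/-- The positive orthant `ℝ^n_+`. -/
def posOrth (n : ℕ) : Set (Fin n → ℝ) := {x | ∀ i, 0 < x i}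

/-- `q` satisfies the cost-function conditions: `C¹` on `ℝ^n_+`, positive,
positively homogeneous of degree one, with bounded level sets. -/
def IsCostFun (n : ℕ) (q : (Fin n → ℝ) → ℝ) : Prop :=
  ContDiffOn ℝ 1 q (posOrth n) ∧
  (∀ x ∈ posOrth n, 0 < q x) ∧
  (∀ lam : ℝ, 0 < lam → ∀ x ∈ posOrth n, q (fun i => lam * x i) = lam * q x) ∧
  (∀ t : ℝ, Bornology.IsBounded {x | x ∈ posOrth n ∧ q x = t})

/-- The `n`-dimensional Mellin transform `(Mg)(z) = ∫_{ℝ^n_+} x^{z-I} g(x) dx`. -/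
def mellinT (n : ℕ) (g : (Fin n → ℝ) → ℝ) (z : Fin n → ℂ) : ℂ :=
  ∫ x in posOrth n, (∏ i, (x i : ℂ) ^ (z i - 1)) * g x

/-- Membership in `L¹_c(ℝ^n_+)`: measurable with `∫ |f| x^{c-I} < ∞`. -/
def MemL1w (n : ℕ) (c : Fin n → ℝ) (f : (Fin n → ℝ) → ℝ) : Prop :=
  IntegrableOn (fun x => f x * ∏ i, x i ^ (c i - 1)) (posOrth n)

/-- The profit operator `(Π_q f)(p₀, p)`. -/
def Piq (n : ℕ) (q : (Fin n → ℝ) → ℝ) (f : (Fin n → ℝ) → ℝ)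
    (p0 : ℝ) (p : Fin n → ℝ) : ℝ :=
  ∫ x in posOrth n, max 0 (p0 - q (fun i => p i * x i)) * f x


section A
open scoped FourierTransform Convolution ContDiff SchwartzMap
variable {V : Type*} [NormedAddCommGroup V] [InnerProductSpace ℝ V] [FiniteDimensional ℝ V]
  [MeasurableSpace V] [BorelSpace V]

lemma fourier_cont {F : V → ℂ} (hF : Integrable F) : Continuous (𝓕 F) :=
  VectorFourier.fourierIntegral_continuous Real.continuous_fourierChar
    (by exact continuous_inner) hF

lemma ae_zero_of_fourier {F : V → ℂ} (hF : Integrable F) (h : ∀ w, 𝓕 F w = 0) :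
    F =ᵐ[volume] 0 := by
  apply ae_eq_zero_of_integral_contDiff_smul_eq_zero hF.locallyIntegrable
  intro g hg1 hg2
  have hg₁ : HasCompactSupport (Complex.ofRealCLM ∘ g) := hg2.comp_left rfl
  have hg₂ : ContDiff ℝ ∞ (Complex.ofRealCLM ∘ g) := by fun_prop
  set G : 𝓢(V, ℂ) := hg₁.toSchwartzMap hg₂ with hG
  set H : 𝓢(V, ℂ) := 𝓕⁻ G with hH
  have h1 : 𝓕 H = G := by simp [hH]
  have h2 : ∫ ξ, (𝓕 F ξ) • (H ξ) = ∫ x, F x • 𝓕 (H : V → ℂ) x := by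
    simpa using! VectorFourier.integral_bilin_fourierIntegral_eq_flip
      (ContinuousLinearMap.lsmul ℂ ℂ) (L := innerₗ V)
      Real.continuous_fourierChar continuous_inner hF H.integrable
  rw [← SchwartzMap.fourier_coe, h1] at h2
  simp only [h, zero_smul, integral_zero] at h2
  rw [h2]
  refine integral_congr_ae (Filter.Eventually.of_forall fun x => ?_)
  simp [hG, mul_comm]

lemma conv_ofReal (F K : V → ℝ) (s : V) :
    ((fun x => (F x : ℂ)) ⋆[ContinuousLinearMap.mul ℂ ℂ] (fun x => (K x : ℂ))) s
      = ((∫ t, F t * K (s - t) : ℝ) : ℂ) := by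
  simp only [convolution, ContinuousLinearMap.mul_apply']
  rw [← integral_complex_ofReal]
  simp

theorem lemA (K : V → ℝ) (hKi : Integrable K) (hKc : Continuous K) (hKb : ∃ C, ∀ x, |K x| ≤ C) :
    (∀ F : V → ℝ, Integrable F → (∀ s, ∫ t, F t * K (s - t) = 0) → F =ᵐ[volume] 0) ↔
      IsNowhereDense {w | 𝓕 (fun x => (K x : ℂ)) w = 0} := by
  have hKi' : Integrable (fun x => (K x : ℂ)) := hKi.ofReal
  have hcl : IsClosed {w | 𝓕 (fun x => (K x : ℂ)) w = 0} :=
    isClosed_eq (fourier_cont hKi') continuous_const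
  rw [hcl.isNowhereDense_iff]
  constructor
  · intro hinj
    by_contra hne
    obtain ⟨x, hx⟩ := nonempty_iff_ne_empty.2 hne
    obtain ⟨g, hg1, hg2, hg3, -, hg5⟩ := exists_contDiff_tsupport_subset (n := ⊤)
      (mem_interior_iff_mem_nhds.1 hx)
    have hg₁ : HasCompactSupport (Complex.ofRealCLM ∘ g) := hg2.comp_left rfl
    have hg₂ : ContDiff ℝ ∞ (Complex.ofRealCLM ∘ g) := by fun_prop
    set G : 𝓢(V, ℂ) := hg₁.toSchwartzMap hg₂ with hG
    set H : 𝓢(V, ℂ) := 𝓕⁻ G with hH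
    have h1 : 𝓕 H = G := by simp [hH]
    have h1' : 𝓕 (H : V → ℂ) = G := by rw [← SchwartzMap.fourier_coe, h1]
    have hconv : ∀ s, ((H : V → ℂ) ⋆[ContinuousLinearMap.mul ℂ ℂ] (fun x => (K x : ℂ))) s = 0 := by
      set J := ((H : V → ℂ) ⋆[ContinuousLinearMap.mul ℂ ℂ] (fun x => (K x : ℂ))) with hJ
      have hF0 : 𝓕 J = 0 := by
        ext w
        rw [hJ, Real.fourier_mul_convolution_eq H.integrable hKi', h1']
        by_cases hw : g w = 0
        · simp [hG, hw]
        · have : w ∈ {w | 𝓕 (fun x => (K x : ℂ)) w = 0} := hg1 (subset_tsupport _ hw)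
          rw [mem_ofPred_eq] at this
          simp [this]
      have hJi : Integrable J := H.integrable.integrable_convolution _ hKi'
      have hJc : Continuous J := by
        refine BddAbove.continuous_convolution_right_of_integrable _ ?_ H.integrable
          (by fun_prop)
        obtain ⟨C, hC⟩ := hKb
        refine ⟨C, ?_⟩
        rintro _ ⟨x, rfl⟩
        simpa using hC x
      have := hJc.fourierInv_fourier_eq hJi (by rw [hF0]; exact integrable_zero _ _ _)
      intro s
      rw [← this, hF0, Real.fourierInv_eq]
      simp
    have hint : ∀ s, Integrable (fun t => H t * (K (s - t) : ℂ)) := by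
      intro s
      obtain ⟨C, hC⟩ := hKb
      refine H.integrable.mul_bdd (c := C) ?_ ?_
      · exact Continuous.aestronglyMeasurable (by fun_prop)
      · exact Filter.Eventually.of_forall fun x => by simpa using hC (s - x)
    have hre := hinj (fun t => (H t).re) H.integrable.re (fun s => by
      have h := congrArg re (hconv s)
      simp only [convolution, ContinuousLinearMap.mul_apply'] at h
      have e := integral_re (𝕜 := ℂ) (hint s)
      simp only [RCLike.re_eq_complex_re] at e
      rw [← e] at h
      simpa using h)
    have him := hinj (fun t => (H t).im) H.integrable.im (fun s => by
      have h := congrArg im (hconv s)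
      simp only [convolution, ContinuousLinearMap.mul_apply'] at h
      have e := integral_im (𝕜 := ℂ) (hint s)
      simp only [RCLike.im_eq_complex_im] at e
      rw [← e] at h
      simpa using h)
    have hH0 : (H : V → ℂ) =ᵐ[volume] 0 := by
      filter_upwards [hre, him] with t h1 h2
      exact Complex.ext h1 h2
    have := Real.fourier_congr_ae hH0 x
    rw [h1', Real.fourier_eq] at this
    simp [hG, hg5] at this
  · intro hZ F hF hconv
    have hF' : Integrable (fun x => (F x : ℂ)) := hF.ofReal
    have hprod : ∀ w, 𝓕 (fun x => (F x : ℂ)) w * 𝓕 (fun x => (K x : ℂ)) w = 0 := by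
      intro w
      rw [← Real.fourier_mul_convolution_eq hF' hKi']
      have : ((fun x => (F x : ℂ)) ⋆[ContinuousLinearMap.mul ℂ ℂ] (fun x => (K x : ℂ))) = 0 := by
        ext s
        rw [conv_ofReal, hconv s]; simp
      rw [this, Real.fourier_eq]; simp
    have hd := interior_eq_empty_iff_dense_compl.1 hZ
    have h0 : 𝓕 (fun x => (F x : ℂ)) = 0 := by
      refine Continuous.ext_on hd (fourier_cont hF') continuous_const ?_
      intro w hw
      exact (mul_eq_zero.1 (hprod w)).resolve_right hw
    filter_upwards [ae_zero_of_fourier hF' (fun w => by rw [h0]; rfl)] with x hx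
    simpa using hx
end A

section B
variable {n : ℕ} {E : Type*} [NormedAddCommGroup E] [NormedSpace ℝ E]

def expV (n : ℕ) (t : EuclideanSpace ℝ (Fin n)) : Fin n → ℝ := fun i => Real.exp (t i)

lemma expV_mem (t : EuclideanSpace ℝ (Fin n)) : expV n t ∈ posOrth n := fun _ => Real.exp_pos _

def expP (t : Fin n → ℝ) : Fin n → ℝ := fun i => Real.exp (t i)

def expD (t : Fin n → ℝ) : (Fin n → ℝ) →L[ℝ] (Fin n → ℝ) :=
  ContinuousLinearMap.pi fun i => Real.exp (t i) • ContinuousLinearMap.proj i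

lemma expD_det (t : Fin n → ℝ) : (expD t).det = ∏ i, Real.exp (t i) := by
  have : ((expD t : (Fin n → ℝ) →L[ℝ] (Fin n → ℝ)) : (Fin n → ℝ) →ₗ[ℝ] (Fin n → ℝ))
      = Matrix.toLin' (Matrix.diagonal fun i => Real.exp (t i)) := by
    ext i j
    simp [expD, Matrix.mulVec_diagonal]
  rw [ContinuousLinearMap.det, this, LinearMap.det_toLin', Matrix.det_diagonal]

lemma expD_has (t : Fin n → ℝ) : HasFDerivAt expP (expD t) t := by
  rw [hasFDerivAt_pi']
  intro i
  have h := (Real.hasDerivAt_exp (t i)).comp_hasFDerivAt t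
    (ContinuousLinearMap.proj (R := ℝ) (φ := fun _ : Fin n => ℝ) i).hasFDerivAt
  exact h

lemma expP_inj : Function.Injective (expP (n := n)) := by
  intro a b h
  ext i
  exact Real.exp_injective (congrFun h i)

lemma expP_image : expP '' (univ : Set (Fin n → ℝ)) = posOrth n := by
  ext x
  constructor
  · rintro ⟨t, -, rfl⟩ i
    exact Real.exp_pos _
  · intro hx
    exact ⟨fun i => Real.log (x i), mem_univ _, funext fun i => Real.exp_log (hx i)⟩

lemma posOrth_meas : MeasurableSet (posOrth n) := by
  have : posOrth n = univ.pi fun _ => Ioi 0 := by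
    ext x; simp [posOrth]
  rw [this]
  exact MeasurableSet.univ_pi fun _ => measurableSet_Ioi

lemma int_posOrth (g : (Fin n → ℝ) → E) :
    ∫ x in posOrth n, g x = ∫ t : EuclideanSpace ℝ (Fin n), (∏ i, Real.exp (t i)) • g (expV n t) := by
  rw [← expP_image, integral_image_eq_integral_abs_det_fderiv_smul volume MeasurableSet.univ
    (fun x _ => (expD_has x).hasFDerivWithinAt) expP_inj.injOn, Measure.restrict_univ]
  rw [← (EuclideanSpace.volume_preserving_symm_measurableEquiv_toLp (Fin n)).integral_comp']
  refine integral_congr_ae (Filter.Eventually.of_forall fun t => ?_)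
  simp only [expD_det]
  rw [abs_of_nonneg (Finset.prod_nonneg fun i _ => (Real.exp_pos _).le)]
  rfl

lemma integrable_posOrth (g : (Fin n → ℝ) → E) :
    IntegrableOn g (posOrth n) ↔
      Integrable fun t : EuclideanSpace ℝ (Fin n) => (∏ i, Real.exp (t i)) • g (expV n t) := by
  rw [← expP_image, integrableOn_image_iff_integrableOn_abs_det_fderiv_smul volume
    MeasurableSet.univ (fun x _ => (expD_has x).hasFDerivWithinAt) expP_inj.injOn,
    integrableOn_univ]
  rw [← (EuclideanSpace.volume_preserving_symm_measurableEquiv_toLp (Fin n)).integrable_comp_emb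
    (MeasurableEquiv.measurableEmbedding _)]
  refine integrable_congr (Filter.Eventually.of_forall fun t => ?_)
  simp only [expD_det, Function.comp]
  rw [abs_of_nonneg (Finset.prod_nonneg fun i _ => (Real.exp_pos _).le)]
  rfl

lemma integrable_gamma (c : Fin n → ℝ) (hc : ∀ i, 0 < c i) (δ : ℝ) (hδ : 0 < δ) :
    IntegrableOn (fun x : Fin n → ℝ => ∏ i, (x i ^ (c i - 1) * Real.exp (-δ * x i))) (posOrth n) := by
  have : posOrth n = univ.pi fun _ => Ioi 0 := by
    ext x; simp [posOrth]
  rw [this, IntegrableOn, volume_pi, Measure.restrict_pi_pi]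
  refine Integrable.fintype_prod (f := fun i (y : ℝ) => y ^ (c i - 1) * Real.exp (-δ * y))
    fun i => ?_
  have := integrableOn_rpow_mul_exp_neg_mul_rpow (p := 1) (s := c i - 1) (b := δ)
    (by linarith [hc i]) one_pos hδ
  simpa [IntegrableOn] using this

lemma integral_max (a : ℝ) (ha : 0 < a) :
    IntegrableOn (fun p => Real.exp (-p) * max 0 (p - a)) (Ioi 0) ∧
    ∫ p in Ioi 0, Real.exp (-p) * max 0 (p - a) = Real.exp (-a) := by
  have hsub : Ioi a ⊆ Ioi (0:ℝ) := Ioi_subset_Ioi ha.le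
  have hind : EqOn (fun p => Real.exp (-p) * max 0 (p - a))
      ((Ioi a).indicator fun p => Real.exp (-p) * (p - a)) (Ioi 0) := by
    intro p _
    by_cases h : p ∈ Ioi a
    · simp only [indicator_of_mem h]
      rw [max_eq_right (by have := mem_Ioi.1 h; linarith)]
    · simp only [indicator_of_notMem h]
      rw [max_eq_left (by have := notMem_Ioi.1 h; linarith)]; simp
  have hd : ∀ x ∈ Ici a, HasDerivAt (fun p => -(Real.exp (-p) * (p - a + 1)))
      (Real.exp (-x) * (x - a)) x := by
    intro x _
    have h1 : HasDerivAt (fun p : ℝ => Real.exp (-p)) (Real.exp (-x) * (-1)) x :=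
      (hasDerivAt_neg x).exp
    have h2 : HasDerivAt (fun p : ℝ => p - a + 1) 1 x :=
      ((hasDerivAt_id x).sub_const a).add_const 1
    exact ((h1.mul h2).neg).congr_deriv (by ring)
  have hlim : Filter.Tendsto (fun p => -(Real.exp (-p) * (p - a + 1))) Filter.atTop (nhds 0) := by
    have h1 := Real.tendsto_pow_mul_exp_neg_atTop_nhds_zero 1
    have h2 := Real.tendsto_exp_neg_atTop_nhds_zero.mul_const (1 - a)
    have := (h1.add h2).neg
    simp only [zero_mul, add_zero, neg_zero] at this
    refine this.congr fun p => ?_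
    ring
  have hint : IntegrableOn (fun p => Real.exp (-p) * (p - a)) (Ioi a) :=
    integrableOn_Ioi_deriv_of_nonneg' hd
      (fun x hx => mul_nonneg (Real.exp_pos _).le (by have := mem_Ioi.1 hx; linarith)) hlim
  constructor
  · rw [integrableOn_congr_fun hind measurableSet_Ioi]
    exact ((integrable_indicator_iff measurableSet_Ioi).2 hint).integrableOn
  · rw [setIntegral_congr_fun measurableSet_Ioi hind, setIntegral_indicator measurableSet_Ioi,
      inter_eq_self_of_subset_right hsub, integral_Ioi_of_hasDerivAt_of_tendsto' hd hint hlim]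
    simp

end B

section C
variable {n : ℕ}

lemma lemC (c : Fin n → ℝ) (hc : ∀ i, 0 < c i) (Q : EuclideanSpace ℝ (Fin n) → ℝ)
    (hQc : Continuous Q) (hQp : ∀ t, 0 < Q t)
    (hQs : ∀ (a : ℝ) t, Q (t + WithLp.toLp 2 (fun _ => a)) = Real.exp a * Q t)
    (hint : Integrable fun t : EuclideanSpace ℝ (Fin n) =>
      Real.exp (∑ i, c i * t i) * Real.exp (-Q t))
    (z : Fin n → ℂ) (hz : ∀ i, (z i).re = c i) :
    ∫ t : EuclideanSpace ℝ (Fin n), cexp (∑ i, z i * (t i : ℂ)) * ((Real.exp (-Q t) : ℝ) : ℂ)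
     = Complex.Gamma (∑ i, z i + 2) *
      ∫ t : EuclideanSpace ℝ (Fin n), cexp (∑ i, z i * (t i : ℂ)) * ((max 0 (1 - Q t) : ℝ) : ℂ) := by
  set W : EuclideanSpace ℝ (Fin n) → ℂ := fun t => cexp (∑ i, z i * (t i : ℂ)) with hW
  have hWc : Continuous W := by fun_prop
  have hWn : ∀ t, ‖W t‖ = Real.exp (∑ i, c i * t i) := by
    intro t
    simp [hW, Complex.norm_exp, hz]
  set M := ∫ t, W t * ((max 0 (1 - Q t) : ℝ) : ℂ) with hM
  let k : EuclideanSpace ℝ (Fin n) → ℝ → ℂ :=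
    fun t p => W t * ((Real.exp (-p) * max 0 (p - Q t) : ℝ) : ℂ)
  have e1 : ∀ t, W t * ((Real.exp (-Q t) : ℝ) : ℂ) = ∫ p in Ioi (0 : ℝ), k t p := by
    intro t
    simp only [k]
    rw [integral_const_mul, integral_complex_ofReal, (integral_max _ (hQp t)).2]
  have hki : Integrable (Function.uncurry k) (volume.prod (volume.restrict (Ioi 0))) := by
    have hm : AEStronglyMeasurable (Function.uncurry k)
        ((volume : Measure (EuclideanSpace ℝ (Fin n))).prod (volume.restrict (Ioi 0))) := by
      apply Continuous.aestronglyMeasurable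
      simp only [Function.uncurry_def, k]
      fun_prop
    refine (integrable_prod_iff hm).2 ⟨Filter.Eventually.of_forall fun t => ?_, ?_⟩
    · exact ((integral_max _ (hQp t)).1.ofReal).const_mul (W t)
    · refine hint.congr (Filter.Eventually.of_forall fun t => ?_)
      simp only [Function.uncurry_apply_pair, k, norm_mul, hWn]
      rw [integral_const_mul]
      congr 1
      rw [← (integral_max _ (hQp t)).2]
      refine integral_congr_ae (Filter.Eventually.of_forall fun p => ?_)
      simp only [Complex.norm_real]
      rw [Real.norm_of_nonneg]
      positivity
  have e2 : ∀ p ∈ Ioi (0 : ℝ), ∫ t, k t p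
      = ((Real.exp (-p) : ℝ) : ℂ) * (p : ℂ) ^ ((∑ i, z i + 2) - 1) * M := by
    intro p hp
    have hp : 0 < p := hp
    rw [← integral_add_right_eq_self _ (WithLp.toLp 2 (fun _ : Fin n => Real.log p)), hM,
      ← integral_const_mul]
    refine integral_congr_ae (Filter.Eventually.of_forall fun t => ?_)
    simp only [k, hQs, Real.exp_log hp]
    have h1 : W (t + WithLp.toLp 2 (fun _ : Fin n => Real.log p))
        = W t * (p : ℂ) ^ (∑ i, z i) := by
      rw [Complex.cpow_def_of_ne_zero (by exact_mod_cast hp.ne'), ← Complex.ofReal_log hp.le]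
      simp only [hW]
      rw [← Complex.exp_add]
      congr 1
      simp only [PiLp.add_apply, ofReal_add, mul_add, Finset.sum_add_distrib, ← Finset.sum_mul]
      ring
    have h2 : max 0 (p - p * Q t) = p * max 0 (1 - Q t) := by
      rw [mul_max_of_nonneg _ _ hp.le]; ring_nf
    have h3 : (p : ℂ) ^ ((∑ i, z i + 2) - 1) = (p : ℂ) ^ (∑ i, z i) * p := by
      rw [show (∑ i, z i + 2) - 1 = ∑ i, z i + 1 by ring,
        Complex.cpow_add _ _ (by exact_mod_cast hp.ne'), Complex.cpow_one]
    rw [h1, h2, h3]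
    push_cast
    ring
  calc ∫ t, W t * ((Real.exp (-Q t) : ℝ) : ℂ) = ∫ t, ∫ p in Ioi (0 : ℝ), k t p := by
        simp only [e1]
    _ = ∫ p in Ioi (0 : ℝ), ∫ t, k t p := integral_integral_swap hki
    _ = ∫ p in Ioi (0 : ℝ), ((Real.exp (-p) : ℝ) : ℂ) * (p : ℂ) ^ ((∑ i, z i + 2) - 1) * M :=
        setIntegral_congr_fun measurableSet_Ioi e2
    _ = _ := by
        rw [integral_mul_const, Complex.Gamma_eq_integral, Complex.GammaIntegral]
        simp only [add_re, re_sum, hz]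
        have : 0 ≤ ∑ i, c i := Finset.sum_nonneg fun i _ => (hc i).le
        norm_num; linarith
end C

section D
open scoped FourierTransform
variable {n : ℕ} {q : (Fin n → ℝ) → ℝ} {c : Fin n → ℝ}

local notation "VV" => EuclideanSpace ℝ (Fin n)

lemma expV_cont : Continuous (expV n) := by
  unfold expV; fun_prop

lemma Q_cont (hq : IsCostFun n q) : Continuous fun t : VV => q (expV n t) := by
  have := hq.1.continuousOn
  exact this.comp_continuous expV_cont expV_mem

lemma Q_bound (hq : IsCostFun n q) : ∃ R : ℝ, 0 < R ∧ ∀ x ∈ posOrth n, ∀ i, x i ≤ R * q x := by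
  obtain ⟨R, hR⟩ := (hq.2.2.2 1).exists_norm_le
  refine ⟨max R 1, by positivity, fun x hx i => ?_⟩
  have hqx := hq.2.1 x hx
  have hy : (fun i => (q x)⁻¹ * x i) ∈ posOrth n := fun i => by have := hx i; positivity
  have h1 : q (fun i => (q x)⁻¹ * x i) = 1 := by
    rw [hq.2.2.1 _ (by positivity) x hx]; field_simp
  have h2 := (norm_le_pi_norm _ i).trans (hR _ ⟨hy, h1⟩)
  have h3 : (q x)⁻¹ * x i ≤ max R 1 := ((le_abs_self _).trans h2).trans (le_max_left _ _)
  rw [inv_mul_le_iff₀ hqx] at h3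
  linarith

lemma prod_rpow_exp (c : Fin n → ℝ) (t : VV) :
    (∏ i, Real.exp (t i)) * ∏ i, Real.exp (t i) ^ (c i - 1) = Real.exp (∑ i, c i * t i) := by
  rw [← Finset.prod_mul_distrib, Real.exp_sum]
  refine Finset.prod_congr rfl fun i _ => ?_
  rw [← Real.exp_mul, ← Real.exp_add]; ring_nf

lemma Q_int (hn : 2 ≤ n) (hq : IsCostFun n q) (hc : ∀ i, 0 < c i) :
    Integrable fun t : VV => Real.exp (∑ i, c i * t i) * Real.exp (-q (expV n t)) := by
  obtain ⟨R, hR, hb⟩ := Q_bound hq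
  have hn0 : (0 : ℝ) < n := by exact_mod_cast (by omega : 0 < n)
  have h := (integrable_posOrth _).1 (integrable_gamma c hc (1 / (n * R)) (by positivity))
  have hQ := Q_cont hq
  have hE : Continuous fun t : VV => Real.exp (∑ i, c i * t i) := by fun_prop
  refine h.mono' (hE.mul (Real.continuous_exp.comp hQ.neg)).aestronglyMeasurable
    (Filter.Eventually.of_forall fun t => ?_)
  rw [Real.norm_of_nonneg (by positivity), smul_eq_mul, Finset.prod_mul_distrib, ← mul_assoc]
  simp only [expV]
  rw [prod_rpow_exp, ← Real.exp_sum]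
  gcongr
  rw [← Finset.mul_sum]
  have hs : ∑ i, Real.exp (t i) ≤ ∑ _i : Fin n, R * q (expV n t) :=
    Finset.sum_le_sum fun i _ => hb _ (expV_mem t) i
  rw [Finset.sum_const, Finset.card_univ, Fintype.card_fin, nsmul_eq_mul] at hs
  have : 1 / (n * R) * ∑ i, Real.exp (t i) ≤ q (expV n t) := by
    rw [one_div, inv_mul_le_iff₀ (by positivity)]; linarith
  linarith

def KK (n : ℕ) (q : (Fin n → ℝ) → ℝ) (c : Fin n → ℝ) (t : EuclideanSpace ℝ (Fin n)) : ℝ :=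
  max 0 (1 - q (expV n t)) * Real.exp (∑ i, c i * t i)

lemma KK_cont (hq : IsCostFun n q) : Continuous (KK n q c) := by
  have hQ := Q_cont hq
  have hE : Continuous fun t : VV => Real.exp (∑ i, c i * t i) := by fun_prop
  exact (continuous_const.max (continuous_const.sub hQ)).mul hE

lemma KK_nonneg (t : VV) : 0 ≤ KK n q c t := by
  unfold KK; positivity

lemma KK_int (hn : 2 ≤ n) (hq : IsCostFun n q) (hc : ∀ i, 0 < c i) :
    Integrable (KK n q c) := by
  refine (Q_int hn hq hc).mono' (KK_cont hq).aestronglyMeasurable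
    (Filter.Eventually.of_forall fun t => ?_)
  rw [Real.norm_of_nonneg (KK_nonneg t), KK, mul_comm]
  gcongr
  refine max_le (Real.exp_pos _).le ?_
  have := Real.add_one_le_exp (-q (expV n t))
  linarith

lemma KK_bdd (hq : IsCostFun n q) (hc : ∀ i, 0 < c i) : ∃ C, ∀ t, |KK n q c t| ≤ C := by
  obtain ⟨R, hR, hb⟩ := Q_bound hq
  refine ⟨∏ i, R ^ c i, fun t => ?_⟩
  rw [abs_of_nonneg (KK_nonneg t), KK]
  have hq0 := hq.2.1 _ (expV_mem t)
  by_cases h : 1 ≤ q (expV n t)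
  · rw [max_eq_left (by linarith), zero_mul]
    exact Finset.prod_nonneg fun i _ => by positivity
  · have h1 : max 0 (1 - q (expV n t)) ≤ 1 := max_le zero_le_one (by linarith)
    have h2 : Real.exp (∑ i, c i * t i) ≤ ∏ i, R ^ c i := by
      rw [Real.exp_sum]
      refine Finset.prod_le_prod (fun i _ => (Real.exp_pos _).le) fun i _ => ?_
      rw [mul_comm, Real.exp_mul]
      have h3 : Real.exp (t i) ≤ R := by
        have := hb _ (expV_mem t) i
        simp only [expV] at this h
        nlinarith
      exact Real.rpow_le_rpow (Real.exp_pos _).le h3 (hc i).le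
    calc _ ≤ 1 * Real.exp (∑ i, c i * t i) := by gcongr
      _ ≤ _ := by rwa [one_mul]

lemma Q_shift (hq : IsCostFun n q) (a : ℝ) (t : VV) :
    q (expV n (t + WithLp.toLp 2 (fun _ => a))) = Real.exp a * q (expV n t) := by
  rw [← hq.2.2.1 _ (Real.exp_pos a) _ (expV_mem t)]
  congr 1
  ext i
  simp [expV, Real.exp_add, mul_comm]

lemma mellin_eq (z : Fin n → ℂ) (g : (Fin n → ℝ) → ℝ) :
    mellinT n g z = ∫ t : VV, cexp (∑ i, z i * (t i : ℂ)) * (g (expV n t) : ℂ) := by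
  rw [mellinT, int_posOrth]
  refine integral_congr_ae (Filter.Eventually.of_forall fun t => ?_)
  simp only [expV, Complex.real_smul]
  rw [← mul_assoc]
  congr 1
  rw [Complex.ofReal_prod, ← Finset.prod_mul_distrib, Complex.exp_sum]
  refine Finset.prod_congr rfl fun i _ => ?_
  rw [Complex.cpow_def_of_ne_zero (by exact_mod_cast (Real.exp_pos _).ne'),
    ← Complex.ofReal_log (Real.exp_pos _).le, Real.log_exp, Complex.ofReal_exp, ← Complex.exp_add]
  congr 1; ring

def Phi (n : ℕ) : (Fin n → ℝ) ≃ₜ EuclideanSpace ℝ (Fin n) :=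
  (Homeomorph.smulOfNeZero (-(2 * Real.pi)⁻¹ : ℝ) (neg_ne_zero.2 (inv_ne_zero Real.two_pi_pos.ne'))).trans
    (PiLp.continuousLinearEquiv 2 ℝ (fun _ : Fin n => ℝ)).symm.toHomeomorph

lemma Phi_apply (ξ : Fin n → ℝ) (i : Fin n) : Phi n ξ i = -(2 * Real.pi)⁻¹ * ξ i := rfl

lemma fourier_KK (ξ : Fin n → ℝ) :
    𝓕 (fun t => (KK n q c t : ℂ)) (Phi n ξ) =
      ∫ t : VV, cexp (∑ i, ((c i : ℂ) + I * (ξ i : ℂ)) * (t i : ℂ)) *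
        ((max 0 (1 - q (expV n t)) : ℝ) : ℂ) := by
  rw [Real.fourier_eq']
  refine integral_congr_ae (Filter.Eventually.of_forall fun t => ?_)
  simp only [KK, smul_eq_mul, Complex.ofReal_mul, Complex.ofReal_exp]
  rw [mul_left_comm, mul_comm, ← Complex.exp_add]
  congr 2
  simp only [PiLp.inner_apply, Phi_apply, RCLike.inner_apply, conj_trivial]
  push_cast
  rw [Finset.mul_sum, Finset.sum_mul, ← Finset.sum_add_distrib]
  refine Finset.sum_congr rfl fun i _ => ?_
  have : (Real.pi : ℂ) ≠ 0 := by exact_mod_cast Real.pi_ne_zero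
  field_simp
  ring

lemma zero_iff (hn : 2 ≤ n) (hq : IsCostFun n q) (hc : ∀ i, 0 < c i) (ξ : Fin n → ℝ) :
    mellinT n (fun x => Real.exp (-q x)) (fun i => (c i : ℂ) + I * (ξ i : ℂ)) = 0 ↔
      𝓕 (fun t => (KK n q c t : ℂ)) (Phi n ξ) = 0 := by
  rw [mellin_eq, fourier_KK, lemC c hc (fun t => q (expV n t)) (Q_cont hq)
    (fun t => hq.2.1 _ (expV_mem t)) (Q_shift hq) (Q_int hn hq hc) _ (by intro i; simp)]
  rw [mul_eq_zero, or_iff_right]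
  apply Complex.Gamma_ne_zero_of_re_pos
  have : 0 ≤ ∑ i, c i := Finset.sum_nonneg fun i _ => (hc i).le
  simp
  linarith

lemma nd_iff (s : Set VV) : IsNowhereDense (Phi n ⁻¹' s) ↔ IsNowhereDense s := by
  rw [IsNowhereDense, IsNowhereDense, ← (Phi n).preimage_closure, ← (Phi n).preimage_interior]
  constructor
  · intro h
    rw [← (Phi n).image_preimage (interior (closure s)), h, image_empty]
  · intro h; rw [h, preimage_empty]

def Fop (n : ℕ) (c : Fin n → ℝ) (f : (Fin n → ℝ) → ℝ) (t : EuclideanSpace ℝ (Fin n)) : ℝ :=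
  (∏ i, Real.exp (-t i)) * (f (expV n (-t)) * Real.exp (∑ i, c i * t i))

lemma Fop_aux (f : (Fin n → ℝ) → ℝ) (t : VV) :
    Fop n c f t = (∏ i, Real.exp ((-t) i)) *
      (f (expV n (-t)) * ∏ i, expV n (-t) i ^ ((1 - c i) - 1)) := by
  simp only [Fop, expV, PiLp.neg_apply]
  congr 2
  rw [Real.exp_sum]
  refine Finset.prod_congr rfl fun i _ => ?_
  rw [← Real.exp_mul]; ring_nf

lemma Fop_int (f : (Fin n → ℝ) → ℝ) :
    MemL1w n (fun i => 1 - c i) f ↔ Integrable (Fop n c f) := by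
  rw [MemL1w, integrable_posOrth,
    ← (Measure.measurePreserving_neg (volume : Measure VV)).integrable_comp_emb
      (MeasurableEquiv.neg VV).measurableEmbedding]
  refine integrable_congr (Filter.Eventually.of_forall fun t => ?_)
  simp only [Fop_aux, smul_eq_mul, Function.comp]

lemma Fop_ae (f : (Fin n → ℝ) → ℝ) (hf : MemL1w n (fun i => 1 - c i) f) :
    (∀ᵐ x ∂(volume.restrict (posOrth n)), f x = 0) ↔ Fop n c f =ᵐ[volume] 0 := by
  have hF := (Fop_int f).1 hf
  have e : ∫ x in posOrth n, ‖f x * ∏ i, x i ^ ((1 - c i) - 1)‖ = ∫ t, ‖Fop n c f t‖ := by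
    rw [int_posOrth, ← integral_neg_eq_self]
    refine integral_congr_ae (Filter.Eventually.of_forall fun t => ?_)
    simp only [Fop_aux, smul_eq_mul]
    rw [norm_mul (∏ i, Real.exp ((-t) i)), Real.norm_of_nonneg
      (Finset.prod_nonneg fun i _ => (Real.exp_pos _).le)]
  have h1 := integral_eq_zero_iff_of_nonneg (fun t => norm_nonneg _) hf.norm
  have h2 := integral_eq_zero_iff_of_nonneg (fun t => norm_nonneg _) hF.norm
  rw [e, h2] at h1
  have h3 : (fun a => ‖Fop n c f a‖) =ᵐ[volume] 0 ↔ Fop n c f =ᵐ[volume] 0 := by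
    simp [Filter.EventuallyEq]
  rw [← h3, h1]
  refine Filter.eventually_congr ?_
  filter_upwards [ae_restrict_mem posOrth_meas] with x hx
  have : 0 < ∏ i, x i ^ ((1 - c i) - 1) :=
    Finset.prod_pos fun i _ => Real.rpow_pos_of_pos (hx i) _
  simp only [Pi.zero_apply, norm_eq_zero]
  rw [mul_eq_zero, or_iff_left this.ne']

lemma Piq_eq (hq : IsCostFun n q) (f : (Fin n → ℝ) → ℝ) (p0 : ℝ) (hp0 : 0 < p0)
    (s : VV) :
    Piq n q f p0 (fun i => p0 * Real.exp (s i)) =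
      p0 * Real.exp (-∑ i, c i * s i) * ∫ t, Fop n c f t * KK n q c (s - t) := by
  rw [Piq, int_posOrth, ← integral_neg_eq_self, ← integral_const_mul]
  refine integral_congr_ae (Filter.Eventually.of_forall fun t => ?_)
  simp only [Fop, KK, smul_eq_mul]
  have h1 : q (fun i => p0 * Real.exp (s i) * expV n (-t) i) = p0 * q (expV n (s - t)) := by
    rw [← hq.2.2.1 _ hp0 _ (expV_mem _)]
    congr 1
    ext i
    simp [expV, sub_eq_add_neg, Real.exp_add, mul_assoc]
  have h2 : max 0 (p0 - p0 * q (expV n (s - t))) = p0 * max 0 (1 - q (expV n (s - t))) := by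
    rw [mul_max_of_nonneg _ _ hp0.le]; ring_nf
  have h3 : Real.exp (-∑ i, c i * s i) * Real.exp (∑ i, c i * t i) *
      Real.exp (∑ i, c i * (s - t) i) = 1 := by
    rw [← Real.exp_add, ← Real.exp_add, Real.exp_eq_one_iff]
    simp only [PiLp.sub_apply, mul_sub, Finset.sum_sub_distrib]
    ring
  rw [h1, h2]
  simp only [PiLp.neg_apply]
  linear_combination (-(∏ i, Real.exp (-t i)) * (p0 * max 0 (1 - q (expV n (s - t)))) *
    f (expV n (-t))) * h3

lemma Piq_zero_iff (hq : IsCostFun n q) (f : (Fin n → ℝ) → ℝ) :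
    (∀ p0 : ℝ, 0 < p0 → ∀ p ∈ posOrth n, Piq n q f p0 p = 0) ↔
      ∀ s, ∫ t, Fop n c f t * KK n q c (s - t) = 0 := by
  constructor
  · intro h s
    have h1 := h 1 one_pos (fun i => 1 * Real.exp (s i)) (fun i => by positivity)
    rw [Piq_eq (c := c) hq f 1 one_pos] at h1
    exact (mul_eq_zero.1 h1).resolve_left (by positivity)
  · intro h p0 hp0 p hp
    have : p = fun i => p0 * Real.exp
        ((WithLp.toLp 2 (fun i => Real.log (p i / p0)) : VV) i) := by
      ext i
      have := hp i
      simp only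
      rw [Real.exp_log (by positivity)]; field_simp
    rw [this, Piq_eq (c := c) hq f p0 hp0, h, mul_zero]

lemma Fop_surj (F : VV → ℝ) : ∃ f, Fop n c f = F := by
  refine ⟨fun x => F (WithLp.toLp 2 (fun i => -Real.log (x i))) *
    Real.exp (∑ i, (c i - 1) * Real.log (x i)), ?_⟩
  ext t
  have h : (WithLp.toLp 2 (fun i => -Real.log (expV n (-t) i)) : VV) = t := by
    ext i; simp [expV]
  simp only [Fop, h]
  rw [← Real.exp_sum]
  have : ∀ i, Real.log (expV n (-t) i) = - t i := by intro i; simp [expV]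
  simp only [this]
  rw [mul_assoc, ← Real.exp_add, mul_left_comm, ← Real.exp_add, ← Finset.sum_add_distrib,
    ← Finset.sum_add_distrib, Finset.sum_eq_zero, Real.exp_zero, mul_one]
  intro i _
  ring

end D

/-- Theorem: for a cost function `q` and `c ∈ ℝ^n_+`, the profit operator `Π_q` is
injective on `L¹_{I-c}(ℝ^n_+)` iff the zero set of `(M e^{-q})(c + iξ)` is nowhere
dense in `ℝ^n`. -/
theorem piq_injective_L1_iff_mellin_zeros_nowhereDense
    (n : ℕ) (hn : 2 ≤ n) (q : (Fin n → ℝ) → ℝ) (hq : IsCostFun n q)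
    (c : Fin n → ℝ) (hc : ∀ i, 0 < c i) :
    (∀ f : (Fin n → ℝ) → ℝ, MemL1w n (fun i => 1 - c i) f →
        (∀ p0 : ℝ, 0 < p0 → ∀ p ∈ posOrth n, Piq n q f p0 p = 0) →
        ∀ᵐ x ∂(volume.restrict (posOrth n)), f x = 0) ↔
      IsNowhereDense {ξ : Fin n → ℝ |
        mellinT n (fun x => Real.exp (-q x)) (fun i => (c i : ℂ) + I * (ξ i : ℂ)) = 0} := by
  have hset : {ξ : Fin n → ℝ |
        mellinT n (fun x => Real.exp (-q x)) (fun i => (c i : ℂ) + I * (ξ i : ℂ)) = 0} =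
      Phi n ⁻¹' {w | FourierTransform.fourier (fun t => (KK n q c t : ℂ)) w = 0} := by
    ext ξ
    exact zero_iff hn hq hc ξ
  rw [hset, nd_iff, ← lemA (KK n q c) (KK_int hn hq hc) (KK_cont hq) (KK_bdd hq hc)]
  constructor
  · intro h F hF hconv
    obtain ⟨f, rfl⟩ := Fop_surj (c := c) F
    have hf := (Fop_int f).2 hF
    exact (Fop_ae f hf).1 (h f hf ((Piq_zero_iff hq f).2 hconv))
  · intro h f hf hp
    exact (Fop_ae f hf).2 (h _ ((Fop_int f).1 hf) ((Piq_zero_iff hq f).1 hp))
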